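/- The Dirichlet series Z(s) := Σ_{m ≡ 1 (mod 3)} N(m)^{−s} · ∏_{π ≡ 1 (mod 3), π | m} (1 + N(π)^{−1})^{−1} (sum over m ∈ ℤ[ω], m ≡ 1 mod 3) satisfies, for Re(s) > 1, Z(s) = (1 − 3^{−s})·ζ_{ℚ(ω)}(s)·∏_{π ≡ 1 (mod 3)} (1 − 1/(N(π)^s (N(π)+1))). -/

import Mathlib

open Complex

noncomputable section

/-- The primitive cube root of unity `ω = e^{2πi/3}`. -/
def ω : ℂ := Complex.exp (2 * Real.pi * Complex.I / 3)

/-- The ring of Eisenstein integers `ℤ[ω]`, as a subring of `ℂ`. -/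
def Zω : Subring ℂ := Subring.closure {ω}

/-- `ω` as an element of `ℤ[ω]`. -/
def ωZ : Zω := ⟨ω, Subring.subset_closure rfl⟩

/-- The ramified prime `λ = 1 - ω` of `ℤ[ω]`. -/
def lamZ : Zω := 1 - ωZ

/-- The norm `N(a) = |a|²` from `ℚ(ω)` to `ℚ`, restricted to `ℤ[ω]`. -/
def Nm (a : Zω) : ℝ := Complex.normSq (a : ℂ)

/-- The norm of an Eisenstein integer, as a natural number. -/
def NmNat (a : Zω) : ℕ := ⌊Complex.normSq (a : ℂ)⌋₊

/-- `e(z) = e^{2πi Tr(z)} = e^{2πi (z + z̄)}`. -/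
def eE (z : ℂ) : ℂ := Complex.exp (2 * Real.pi * Complex.I * (z + (starRingEnd ℂ) z))

/-- `χ` is the cubic residue symbol `χ a b = (a/b)₃` on `ℤ[ω]`:
it is multiplicative in both arguments, and at prime moduli `π` coprime to `3`
it is given by the power-residue congruence
`(a/π)₃ ≡ a^{(N(π)-1)/3} (mod π)`, with values among `{1, ω, ω²}` (and `0` when `π ∣ a`). -/
def IsCubicSymbol (χ : Zω → Zω → Zω) : Prop :=
  (∀ a b₁ b₂ : Zω, χ a (b₁ * b₂) = χ a b₁ * χ a b₂) ∧
  (∀ a₁ a₂ b : Zω, χ (a₁ * a₂) b = χ a₁ b * χ a₂ b) ∧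
  (∀ a : Zω, χ a 1 = 1) ∧
  (∀ a π : Zω, Prime π → IsCoprime π 3 →
    (π ∣ a → χ a π = 0) ∧
    (¬ π ∣ a →
      ((χ a π : ℂ) = 1 ∨ (χ a π : ℂ) = ω ∨ (χ a π : ℂ) = ω ^ 2) ∧
      π ∣ (a ^ ((NmNat π - 1) / 3) - χ a π)))

/-- The shifted cubic Gauss sum `g(ν,c) = Σ_{d mod c} (d/c)₃ e(νd/c)`,
relative to a cubic residue symbol `χ`. -/
def gauss (χ : Zω → Zω → Zω) (ν c : Zω) : ℂ :=
  ∑' q : Zω ⧸ Ideal.span {c},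
    ((χ (Quotient.out q) c : Zω) : ℂ) * eE (((ν * Quotient.out q : Zω) : ℂ) / (c : ℂ))

/-- `μ` is the Möbius function of `ℤ[ω]`. -/
def IsMoebiusZω (μ : Zω → ℤ) : Prop :=
  μ 1 = 1 ∧
  (∀ a : Zω, ¬ Squarefree a → μ a = 0) ∧
  (∀ a b : Zω, IsCoprime a b → μ (a * b) = μ a * μ b) ∧
  (∀ π : Zω, Prime π → μ π = -1)

end

lemma om_re : ω.re = -1/2 := by
  have h : (2 * Real.pi * Complex.I / 3 : ℂ) = ((Real.pi - Real.pi/3 : ℝ) : ℂ) * Complex.I := by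
    push_cast; ring
  rw [ω, h, Complex.exp_ofReal_mul_I_re, Real.cos_pi_sub, Real.cos_pi_div_three]; norm_num

lemma om_im : ω.im = √3/2 := by
  have h : (2 * Real.pi * Complex.I / 3 : ℂ) = ((Real.pi - Real.pi/3 : ℝ) : ℂ) * Complex.I := by
    push_cast; ring
  rw [ω, h, Complex.exp_ofReal_mul_I_im, Real.sin_pi_sub, Real.sin_pi_div_three]

lemma s3 : √3 * √3 = (3:ℝ) := Real.mul_self_sqrt (by norm_num)

lemma om_sq : ω * ω = -1 - ω := by
  apply Complex.ext
  · simp only [Complex.mul_re, Complex.sub_re, Complex.neg_re, Complex.one_re, om_re, om_im]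
    nlinarith [s3]
  · simp only [Complex.mul_im, Complex.sub_im, Complex.neg_im, Complex.one_im, om_re, om_im]
    ring

lemma omZ_sq : ωZ * ωZ = -1 - ωZ := Subtype.ext om_sq

/-- The element `a + b ω`. -/
noncomputable def ez (a b : ℤ) : Zω := (a : Zω) + (b : Zω) * ωZ

lemma coe_ez (a b : ℤ) : ((ez a b : Zω) : ℂ) = a + b * ω := by
  simp [ez, ωZ]

lemma exists_ez (x : Zω) : ∃ a b : ℤ, x = ez a b := by
  obtain ⟨x, hx⟩ := x
  have : ∃ a b : ℤ, x = a + b * ω := by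
    refine Subring.closure_induction (p := fun x _ => ∃ a b : ℤ, x = a + b * ω)
      ?_ ?_ ?_ ?_ ?_ ?_ hx
    · rintro x rfl; exact ⟨0, 1, by simp⟩
    · exact ⟨0, 0, by simp⟩
    · exact ⟨1, 0, by simp⟩
    · rintro x y _ _ ⟨a, b, rfl⟩ ⟨c, d, rfl⟩
      exact ⟨a + c, b + d, by push_cast; ring⟩
    · rintro x _ ⟨a, b, rfl⟩
      exact ⟨-a, -b, by push_cast; ring⟩
    · rintro x y _ _ ⟨a, b, rfl⟩ ⟨c, d, rfl⟩
      refine ⟨a * c - b * d, a * d + b * c - b * d, ?_⟩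
      push_cast
      linear_combination (b * d : ℂ) * om_sq
  obtain ⟨a, b, h⟩ := this
  exact ⟨a, b, Subtype.ext (by rw [coe_ez]; exact h)⟩

lemma normSq_uv (u v : ℝ) : Complex.normSq ((u:ℂ) + v * ω) = u^2 - u*v + v^2 := by
  rw [Complex.normSq_apply]
  simp only [Complex.add_re, Complex.add_im, Complex.mul_re, Complex.mul_im, Complex.ofReal_re,
    Complex.ofReal_im, om_re, om_im]
  nlinarith [s3]

lemma Nm_ez (a b : ℤ) : Nm (ez a b) = ((a^2 - a*b + b^2 : ℤ) : ℝ) := by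
  rw [Nm, coe_ez]
  have := normSq_uv a b
  push_cast at this ⊢
  exact this

lemma Nm_mul (x y : Zω) : Nm (x * y) = Nm x * Nm y := by simp [Nm]
lemma Nm_one : Nm 1 = 1 := by simp [Nm]
lemma Nm_zero : Nm 0 = 0 := by simp [Nm]
lemma Nm_nonneg (x : Zω) : 0 ≤ Nm x := Complex.normSq_nonneg _
lemma Nm_eq_zero {x : Zω} : Nm x = 0 ↔ x = 0 := by simp [Nm]
lemma Nm_int (x : Zω) : ∃ n : ℕ, Nm x = n := by
  obtain ⟨a, b, rfl⟩ := exists_ez x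
  have h := Nm_nonneg (ez a b)
  rw [Nm_ez] at *
  obtain ⟨n, hn⟩ := Int.eq_ofNat_of_zero_le (Int.cast_nonneg_iff.mp h)
  exact ⟨n, by rw [hn]; simp⟩
lemma Nm_pos {x : Zω} (hx : x ≠ 0) : 0 < Nm x :=
  lt_of_le_of_ne (Nm_nonneg x) (fun h => hx (Nm_eq_zero.mp h.symm))
lemma Nm_ge_one {x : Zω} (hx : x ≠ 0) : 1 ≤ Nm x := by
  obtain ⟨n, hn⟩ := Nm_int x
  have := Nm_pos hx
  rw [hn] at *
  exact_mod_cast this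
lemma Nm_three : Nm 3 = 9 := by
  have : (3 : Zω) = ez 3 0 := by simp [ez]
  rw [this, Nm_ez]; norm_num
lemma lam_eq : lamZ = ez 1 (-1) := by simp [ez, lamZ]; ring
lemma Nm_lam : Nm lamZ = 3 := by
  rw [lam_eq, Nm_ez]; norm_num
lemma Nm_unit {u : Zω} (hu : IsUnit u) : Nm u = 1 := by
  obtain ⟨v, hv⟩ := hu.exists_right_inv
  have h := congrArg Nm hv
  rw [Nm_mul, Nm_one] at h
  have hu0 : u ≠ 0 := hu.ne_zero
  have hv0 : v ≠ 0 := by rintro rfl; simp [Nm_zero] at h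
  nlinarith [Nm_ge_one hu0, Nm_ge_one hv0]

lemma unit_eq_one {u : Zω} (hu : IsUnit u) (h : (3 : Zω) ∣ u - 1) : u = 1 := by
  obtain ⟨c, hc⟩ := h
  by_contra hne
  have hc0 : c ≠ 0 := by rintro rfl; apply hne; rw [mul_zero, sub_eq_zero] at hc; exact hc
  have h1 : Nm (u - 1) = 9 * Nm c := by rw [hc, Nm_mul, Nm_three]
  have h2 : Nm (u - 1) ≤ 4 := by
    have hn : ‖(u : ℂ)‖ ^ 2 = 1 := by rw [← Complex.normSq_eq_norm_sq]; exact Nm_unit hu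
    have h3 : Nm (u - 1) = ‖(u : ℂ) - 1‖ ^ 2 := by simp [Nm, Complex.normSq_eq_norm_sq]
    have h4 := norm_sub_le (u : ℂ) 1
    rw [norm_one] at h4
    have h5 : ‖(u : ℂ)‖ = 1 := by nlinarith [norm_nonneg (u : ℂ)]
    rw [h3]; nlinarith [norm_nonneg ((u : ℂ) - 1)]
  linarith [Nm_ge_one hc0]

lemma lam_dvd_three : lamZ ∣ (3 : Zω) := ⟨2 + ωZ, by
  rw [lamZ]; linear_combination omZ_sq⟩

lemma lam_not_unit : ¬ IsUnit lamZ := fun h => by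
  have := Nm_unit h; rw [Nm_lam] at this; norm_num at this

lemma lam_ne : lamZ ≠ 0 := by
  intro h; have := Nm_lam; rw [h, Nm_zero] at this; norm_num at this

lemma lam_ndvd {m : Zω} (h : (3 : Zω) ∣ m - 1) : ¬ lamZ ∣ m := fun hd => by
  apply lam_not_unit
  rw [isUnit_iff_dvd_one]
  have := dvd_sub hd (lam_dvd_three.trans h)
  simpa using this

lemma ne_zero_of_cong {m : Zω} (h : (3 : Zω) ∣ m - 1) : m ≠ 0 := by
  rintro rfl; exact lam_ndvd h (dvd_zero _)

lemma assoc_eq {m n : Zω} (hm : (3 : Zω) ∣ m - 1) (hn : (3 : Zω) ∣ n - 1)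
    (h : Associated m n) : m = n := by
  obtain ⟨u, hu⟩ := h
  have : (u : Zω) = 1 := by
    apply unit_eq_one u.isUnit
    have h1 : (u : Zω) - 1 = (n - 1) - u * (m - 1) := by rw [← hu]; ring
    rw [h1]; exact dvd_sub hn (hm.mul_left _)
  rw [← hu, this, mul_one]

lemma mul_cong {m n : Zω} (hm : (3 : Zω) ∣ m - 1) (hn : (3 : Zω) ∣ n - 1) :
    (3 : Zω) ∣ m * n - 1 := by
  have : m * n - 1 = (m - 1) * n + (n - 1) := by ring
  rw [this]; exact dvd_add (hm.mul_right _) hn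

lemma cancel_cong {m n : Zω} (hn : (3 : Zω) ∣ n - 1) (hmn : (3 : Zω) ∣ m * n - 1) :
    (3 : Zω) ∣ m - 1 := by
  have : m - 1 = (m * n - 1) - m * (n - 1) := by ring
  rw [this]; exact dvd_sub hmn (hn.mul_left _)

lemma three_dvd_ez {a b : ℤ} (ha : (3:ℤ) ∣ a) (hb : (3:ℤ) ∣ b) : (3 : Zω) ∣ ez a b := by
  obtain ⟨c, rfl⟩ := ha
  obtain ⟨d, rfl⟩ := hb
  exact ⟨ez c d, by simp [ez]; ring⟩

lemma omZ_unit : IsUnit ωZ := IsUnit.of_mul_eq_one (-1 - ωZ) (by linear_combination -omZ_sq)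

lemma exists_cong {b : Zω} (h : ¬ lamZ ∣ b) : ∃ m : Zω, (3 : Zω) ∣ m - 1 ∧ Associated b m := by
  obtain ⟨x, y, rfl⟩ := exists_ez b
  have hxy : ¬ (3 : ℤ) ∣ x + y := by
    rintro ⟨c, hc⟩
    apply h
    have : ez x y = 3 * (c : Zω) - y * lamZ := by
      have hx : x = 3 * c - y := by linarith
      rw [hx, ez, lamZ]; push_cast; ring
    rw [this]
    exact dvd_sub (lam_dvd_three.mul_right _) (Dvd.intro_left _ rfl)
  have key : ∀ u : Zω, IsUnit u → ∀ p q : ℤ, ez x y * u - 1 = ez p q → (3:ℤ) ∣ p → (3:ℤ) ∣ q →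
      ∃ m : Zω, (3 : Zω) ∣ m - 1 ∧ Associated (ez x y) m := by
    rintro u hu p q he hp hq
    refine ⟨ez x y * u, ?_, hu.unit, rfl⟩
    rw [he]; exact three_dvd_ez hp hq
  have hcases : ((3:ℤ) ∣ x - 1 ∧ (3:ℤ) ∣ y) ∨ ((3:ℤ) ∣ -x - 1 ∧ (3:ℤ) ∣ -y) ∨
      ((3:ℤ) ∣ -y - 1 ∧ (3:ℤ) ∣ x - y) ∨ ((3:ℤ) ∣ y - 1 ∧ (3:ℤ) ∣ y - x) ∨
      ((3:ℤ) ∣ y - x - 1 ∧ (3:ℤ) ∣ -x) ∨ ((3:ℤ) ∣ x - y - 1 ∧ (3:ℤ) ∣ x) := by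
    have h1 : x % 3 = 0 ∨ x % 3 = 1 ∨ x % 3 = 2 := by omega
    have h2 : y % 3 = 0 ∨ y % 3 = 1 ∨ y % 3 = 2 := by omega
    rcases h1 with h1 | h1 | h1 <;> rcases h2 with h2 | h2 | h2 <;> omega
  rcases hcases with h | h | h | h | h | h
  · exact key 1 isUnit_one (x - 1) y (by simp only [ez]; push_cast; ring) h.1 h.2
  · exact key (-1) isUnit_one.neg (-x - 1) (-y) (by simp only [ez]; push_cast; ring) h.1 h.2
  · exact key ωZ omZ_unit (-y - 1) (x - y)
      (by simp only [ez]; push_cast; linear_combination (y : Zω) * omZ_sq) h.1 h.2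
  · exact key (-ωZ) omZ_unit.neg (y - 1) (y - x)
      (by simp only [ez]; push_cast; linear_combination -(y : Zω) * omZ_sq) h.1 h.2
  · exact key (ωZ * ωZ) (omZ_unit.mul omZ_unit) (y - x - 1) (-x)
      (by simp only [ez]; push_cast; linear_combination ((x : Zω) + y * ωZ - y) * omZ_sq) h.1 h.2
  · exact key (-(ωZ * ωZ)) (omZ_unit.mul omZ_unit).neg (x - y - 1) x
      (by simp only [ez]; push_cast; linear_combination -((x : Zω) + y * ωZ - y) * omZ_sq) h.1 h.2

lemma exists_div (x a : Zω) (ha : a ≠ 0) : ∃ q : Zω, Nm (x - q * a) < Nm a := by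
  have ha' : (a : ℂ) ≠ 0 := by simpa using ha
  obtain ⟨u, v, huv⟩ : ∃ u v : ℝ, (x : ℂ) / a = u + v * ω := by
    have hs : (√3 : ℝ) ≠ 0 := by positivity
    refine ⟨((x : ℂ) / a).re + ((x : ℂ) / a).im / √3, 2 * ((x : ℂ) / a).im / √3, ?_⟩
    apply Complex.ext
    · simp only [Complex.add_re, Complex.mul_re, Complex.ofReal_re, Complex.ofReal_im, om_re]
      ring
    · simp only [Complex.add_im, Complex.mul_im, Complex.ofReal_re, Complex.ofReal_im, om_im]
      field_simp; ring
  refine ⟨ez (round u) (round v), ?_⟩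
  have h1 : ((x - ez (round u) (round v) * a : Zω) : ℂ)
      = (((u - round u : ℝ) : ℂ) + ((v - round v : ℝ) : ℂ) * ω) * a := by
    push_cast
    rw [coe_ez]
    have : (x : ℂ) = (u + v * ω) * a := by rw [← huv]; field_simp
    rw [this]; ring
  have h2 : Nm (x - ez (round u) (round v) * a)
      = ((u - round u)^2 - (u - round u) * (v - round v) + (v - round v)^2) * Nm a := by
    rw [Nm, h1, map_mul, normSq_uv, Nm]
  rw [h2]
  have hu := abs_le.mp (abs_sub_round u)
  have hv := abs_le.mp (abs_sub_round v)
  have hp := Nm_pos ha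
  set p := u - round u
  set q := v - round v
  have : p^2 - p*q + q^2 ≤ 3/4 := by
    nlinarith [mul_nonneg (sub_nonneg.mpr hu.2) (sub_nonneg.mpr hv.2), hu.1, hu.2, hv.1, hv.2,
      mul_nonneg (sub_nonneg.mpr hu.1) (sub_nonneg.mpr hu.2),
      mul_nonneg (sub_nonneg.mpr hv.1) (sub_nonneg.mpr hv.2),
      mul_nonneg (sub_nonneg.mpr hu.1) (sub_nonneg.mpr hv.1)]
  nlinarith

instance zpid : IsPrincipalIdealRing Zω := by
  refine ⟨fun I => ?_⟩
  by_cases hI : I = ⊥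
  · subst hI; exact bot_isPrincipal
  obtain ⟨a0, ha0, ha0'⟩ := Submodule.exists_mem_ne_zero_of_ne_bot hI
  choose nn hnn using Nm_int
  obtain ⟨a, ⟨haI, ha⟩, hmin⟩ := WellFounded.has_min (InvImage.wf nn Nat.lt_wfRel.wf)
    {a : Zω | a ∈ I ∧ a ≠ 0} ⟨a0, ha0, ha0'⟩
  refine ⟨a, le_antisymm (fun x hx => ?_) ?_⟩
  · obtain ⟨q, hq⟩ := exists_div x a ha
    rw [hnn, hnn a] at hq
    have hr : x - q * a = 0 := by
      by_contra hne
      exact hmin (x - q * a) ⟨I.sub_mem hx (I.mul_mem_left q haI), hne⟩ (by exact_mod_cast hq)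
    rw [Submodule.mem_span_singleton]
    exact ⟨q, by rw [smul_eq_mul]; exact (sub_eq_zero.mp hr).symm⟩
  · rw [Submodule.span_singleton_le_iff_mem]; exact haI

lemma ez_inj {a b c d : ℤ} (h : ez a b = ez c d) : a = c ∧ b = d := by
  have h1 : Nm (ez (a - c) (b - d)) = 0 := by
    have : ez (a - c) (b - d) = ez a b - ez c d := by simp [ez]; ring
    rw [this, h, sub_self, Nm_zero]
  rw [Nm_ez] at h1
  have h2 : (a-c)^2 - (a-c)*(b-d) + (b-d)^2 = 0 := by exact_mod_cast h1
  have h3 : (b - d)^2 = 0 := by nlinarith [sq_nonneg (2*(a-c) - (b-d)), sq_nonneg (b-d)]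
  have h4 : (a - c)^2 = 0 := by nlinarith [sq_nonneg (2*(b-d) - (a-c)), sq_nonneg (a-c)]
  have h5 := pow_eq_zero_iff (two_ne_zero) |>.mp h3
  have h6 := pow_eq_zero_iff (two_ne_zero) |>.mp h4
  constructor <;> linarith

/-- The basis `1, ω` of `ℤ[ω]`. -/
noncomputable def zbasis : Module.Basis (Fin 2) ℤ Zω :=
  Module.Basis.mk (v := ![1, ωZ])
    (by
      rw [LinearIndependent.pair_iff]
      intro s t h
      have : ez s t = ez 0 0 := by simpa [ez] using h
      exact ez_inj this)
    (by
      intro x _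
      obtain ⟨a, b, rfl⟩ := exists_ez x
      rw [Matrix.range_cons, Matrix.range_cons, Matrix.range_empty, Set.union_empty,
        Set.singleton_union, Submodule.mem_span_pair]
      exact ⟨a, b, by simp [ez]⟩)

lemma card_quot (a : Zω) (ha : a ≠ 0) : (Nat.card (Zω ⧸ Ideal.span {a}) : ℝ) = Nm a := by
  have : Module.Free ℤ Zω := Module.Free.of_basis zbasis
  have : Module.Finite ℤ Zω := Module.Finite.of_basis zbasis
  have h1 : Nat.card (Zω ⧸ Ideal.span {a}) = Ideal.absNorm (Ideal.span {a}) := rfl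
  rw [h1, Ideal.absNorm_span_singleton]
  obtain ⟨x, y, rfl⟩ := exists_ez a
  have hN : Algebra.norm ℤ (ez x y) = x^2 - x*y + y^2 := by
    have hb0 : zbasis 0 = 1 := by simp [zbasis]
    have hb1 : zbasis 1 = ωZ := by simp [zbasis]
    have hr : ∀ p q : ℤ, zbasis.repr (ez p q) = Finsupp.single 0 p + Finsupp.single 1 q := by
      intro p q
      apply zbasis.repr.symm.injective
      simp [hb0, hb1, ez]
    have e0 : ez x y * zbasis 0 = ez x y := by rw [hb0, mul_one]
    have e1 : ez x y * zbasis 1 = ez (-y) (x - y) := by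
      rw [hb1]; simp only [ez]; push_cast; linear_combination (y : Zω) * omZ_sq
    rw [Algebra.norm_eq_matrix_det zbasis, Matrix.det_fin_two]
    simp only [Algebra.leftMulMatrix_eq_repr_mul, e0, e1, hr]
    simp
    ring
  rw [hN, Nm_ez]
  have h0 : 0 ≤ x^2 - x*y + y^2 := by nlinarith [sq_nonneg (x - y), sq_nonneg x, sq_nonneg y, sq_nonneg (x+y)]
  rw [Nat.cast_natAbs, abs_of_nonneg h0]

lemma summable_Nm {r : ℝ} (hr : 1 < r) : Summable (fun x : Zω => (Nm x) ^ (-r)) := by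
  choose fa fb hf using exists_ez
  let φ : Zω → (Fin 2 → ℤ) := fun x => ![fa x, fb x]
  have hφ : Function.Injective φ := by
    intro x y h
    have h0 := congrFun h 0
    have h1 := congrFun h 1
    simp only [φ, Matrix.cons_val_zero, Matrix.cons_val_one] at h0 h1
    rw [hf x, hf y, h0, h1]
  have h2 := ((EisensteinSeries.summable_one_div_norm_rpow (k := 2 * r)
    (by linarith)).comp_injective hφ).mul_left ((3/4 : ℝ) ^ (-r))
  refine Summable.of_nonneg_of_le (fun x => Real.rpow_nonneg (Nm_nonneg x) _) (fun x => ?_) h2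
  by_cases hx : x = 0
  · subst hx
    rw [Nm_zero, Real.zero_rpow (by linarith)]
    exact mul_nonneg (by positivity) (Real.rpow_nonneg (norm_nonneg _) _)
  have hle : (3/4 : ℝ) * ‖φ x‖ ^ 2 ≤ Nm x := by
    have hN : Nm x = (fa x : ℝ)^2 - fa x * fb x + (fb x : ℝ)^2 := by
      conv_lhs => rw [hf x, Nm_ez]
      push_cast; ring
    have hn : ‖φ x‖ ≤ √(4/3 * Nm x) := by
      rw [pi_norm_le_iff_of_nonneg (Real.sqrt_nonneg _)]
      intro i
      apply Real.le_sqrt_of_sq_le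
      fin_cases i
      · simp [φ, Int.norm_eq_abs]; rw [hN]
        nlinarith [sq_nonneg (2 * (fb x : ℝ) - fa x)]
      · simp [φ, Int.norm_eq_abs]; rw [hN]
        nlinarith [sq_nonneg (2 * (fa x : ℝ) - fb x)]
    have h4 : 0 ≤ 4/3 * Nm x := by have := Nm_nonneg x; positivity
    nlinarith [Real.sq_sqrt h4, norm_nonneg (φ x), Real.sqrt_nonneg (4/3 * Nm x)]
  have hpos : 0 < ‖φ x‖ := by
    rw [norm_pos_iff]
    intro h0
    have e0 := congrFun h0 0
    have e1 := congrFun h0 1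
    simp only [φ, Matrix.cons_val_zero, Matrix.cons_val_one, Pi.zero_apply] at e0 e1
    apply hx
    rw [hf x, e0, e1]; simp [ez]
  have := Real.rpow_le_rpow_of_nonpos (by positivity) hle (by linarith : -r ≤ 0)
  refine this.trans (le_of_eq ?_)
  rw [Real.mul_rpow (by norm_num) (by positivity), ← Real.rpow_natCast, ← Real.rpow_mul hpos.le]
  simp only [Function.comp_apply]
  congr 2
  push_cast; ring

lemma finite_dvd {n : Zω} (hn : n ≠ 0) : {x : Zω | x ∣ n}.Finite := by
  obtain ⟨B, hB⟩ := Nm_int n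
  refine (((Set.finite_Icc (-(2 * B + 2) : ℤ) (2 * B + 2)).prod
    (Set.finite_Icc (-(2 * B + 2) : ℤ) (2 * B + 2))).image (fun p => ez p.1 p.2)).subset ?_
  rintro x ⟨c, hc⟩
  obtain ⟨a, b, rfl⟩ := exists_ez x
  have hc0 : c ≠ 0 := by rintro rfl; exact hn (by rw [hc, mul_zero])
  have h1 : Nm (ez a b) ≤ B := by
    rw [← hB, hc, Nm_mul]
    nlinarith [Nm_ge_one hc0, Nm_nonneg (ez a b)]
  rw [Nm_ez] at h1
  have h2 : a^2 - a*b + b^2 ≤ B := by exact_mod_cast h1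
  refine ⟨(a, b), ⟨⟨?_, ?_⟩, ⟨?_, ?_⟩⟩, rfl⟩ <;> dsimp only
  · nlinarith [sq_nonneg (2*b - a), sq_nonneg (a + 1)]
  · nlinarith [sq_nonneg (2*b - a), sq_nonneg (a - 1)]
  · nlinarith [sq_nonneg (2*a - b), sq_nonneg (b + 1)]
  · nlinarith [sq_nonneg (2*a - b), sq_nonneg (b - 1)]

/-- elements congruent to 1 mod 3 -/
abbrev MM : Type := {m : Zω // (3 : Zω) ∣ (m - 1)}
/-- primes congruent to 1 mod 3 -/
abbrev PP : Type := {π : Zω // Prime π ∧ (3 : Zω) ∣ (π - 1)}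

lemma prod_cong (S : Finset PP) : (3 : Zω) ∣ (∏ π ∈ S, π.1) - 1 := by
  classical
  induction S using Finset.induction_on with
  | empty => simp
  | insert a S ha ih => rw [Finset.prod_insert ha]; exact mul_cong a.2.2 ih

lemma prod_dvd {n : Zω} (S : Finset PP) (h : ∀ π ∈ S, π.1 ∣ n) : (∏ π ∈ S, π.1) ∣ n := by
  classical
  apply Finset.prod_dvd_of_isRelPrime _ h
  intro a _ b _ hab
  show IsRelPrime a.1 b.1
  rw [Irreducible.isRelPrime_iff_not_dvd a.2.1.irreducible]
  intro hd
  exact hab (Subtype.ext (assoc_eq a.2.2 b.2.2 (a.2.1.associated_of_dvd b.2.1 hd)))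

lemma Nm_prod (S : Finset PP) : Nm (∏ π ∈ S, π.1) = ∏ π ∈ S, Nm π.1 := by
  classical
  induction S using Finset.induction_on with
  | empty => simp [Nm_one]
  | insert a S ha ih => rw [Finset.prod_insert ha, Finset.prod_insert ha, Nm_mul, ih]

lemma cpow_Nm_mul (x y : Zω) (s : ℂ) :
    (Nm (x * y) : ℂ) ^ s = (Nm x : ℂ) ^ s * (Nm y : ℂ) ^ s := by
  rw [Nm_mul]; push_cast
  exact Complex.mul_cpow_ofReal_nonneg (Nm_nonneg _) (Nm_nonneg _) _

lemma cpow_Nm_prod (S : Finset PP) (s : ℂ) :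
    (Nm (∏ π ∈ S, π.1) : ℂ) ^ s = ∏ π ∈ S, (Nm π.1 : ℂ) ^ s := by
  classical
  induction S using Finset.induction_on with
  | empty => simp [Nm_one]
  | insert a S ha ih => rw [Finset.prod_insert ha, Finset.prod_insert ha, cpow_Nm_mul, ih]

lemma cpow_Nm_pow (x : Zω) (k : ℕ) (s : ℂ) :
    (Nm (x ^ k) : ℂ) ^ s = ((Nm x : ℂ) ^ s) ^ k := by
  induction k with
  | zero => simp [Nm_one]
  | succ k ih => rw [pow_succ, cpow_Nm_mul, ih, pow_succ]

lemma norm_cpow_Nm {x : Zω} (hx : x ≠ 0) (s : ℂ) : ‖(Nm x : ℂ) ^ (-s)‖ = (Nm x) ^ (-s.re) := by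
  rw [Complex.norm_cpow_eq_rpow_re_of_pos (Nm_pos hx)]; simp

lemma summable_MM {s : ℂ} (hs : 1 < s.re) : Summable (fun m : MM => ‖(Nm m.1 : ℂ) ^ (-s)‖) := by
  refine ((summable_Nm hs).comp_injective (i := fun m : MM => m.1) Subtype.val_injective).congr
    (fun m => ?_)
  rw [norm_cpow_Nm (ne_zero_of_cong m.2)]; rfl

lemma summable_PP {s : ℂ} (hs : 1 < s.re) : Summable (fun m : PP => ‖(Nm m.1 : ℂ) ^ (-s)‖) := by
  refine ((summable_Nm hs).comp_injective (i := fun m : PP => m.1) Subtype.val_injective).congr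
    (fun m => ?_)
  rw [norm_cpow_Nm (ne_zero_of_cong m.2.2)]; rfl

lemma pow_lam_le {k k' : ℕ} {m m' : Zω} (h : (3 : Zω) ∣ m - 1)
    (ha : Associated (lamZ ^ k * m) (lamZ ^ k' * m')) : k' ≤ k := by
  by_contra hlt
  push Not at hlt
  have h1 : lamZ ^ k * lamZ ∣ lamZ ^ k * m := by
    rw [← pow_succ]
    exact ((pow_dvd_pow _ hlt).mul_right m').trans ha.symm.dvd
  exact lam_ndvd h ((mul_dvd_mul_iff_left (pow_ne_zero _ lam_ne)).mp h1)

lemma zeta_eq {s : ℂ} (hs : 1 < s.re) :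
    (1 - (3 : ℂ) ^ (-s)) *
        (∑' I : {I : Ideal Zω // I ≠ ⊥}, (Nat.card (Zω ⧸ I.1) : ℂ) ^ (-s)) =
      ∑' m : MM, (Nm m.1 : ℂ) ^ (-s) := by
  let φ : ℕ × MM → {I : Ideal Zω // I ≠ ⊥} := fun p =>
    ⟨Ideal.span {lamZ ^ p.1 * p.2.1}, by
      rw [Ne, Ideal.span_singleton_eq_bot]
      exact mul_ne_zero (pow_ne_zero _ lam_ne) (ne_zero_of_cong p.2.2)⟩
  have hφ : Function.Bijective φ := by
    constructor
    · rintro ⟨k, m⟩ ⟨k', m'⟩ h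
      have h1 : Associated (lamZ ^ k * m.1) (lamZ ^ k' * m'.1) :=
        Ideal.span_singleton_eq_span_singleton.mp (Subtype.ext_iff.mp h)
      have hk : k = k' := le_antisymm (pow_lam_le m'.2 h1.symm) (pow_lam_le m.2 h1)
      subst hk
      have h2 : Associated m.1 m'.1 := h1.of_mul_left (Associated.refl _) (pow_ne_zero _ lam_ne)
      rw [Subtype.ext (assoc_eq m.2 m'.2 h2)]
    · rintro ⟨I, hI⟩
      obtain ⟨a, ha⟩ := IsPrincipalIdealRing.principal I
      have ha' : I = Ideal.span {a} := ha
      have ha0 : a ≠ 0 := by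
        rintro rfl; apply hI; rw [ha']; simp
      obtain ⟨k, b, hb, hab⟩ := WfDvdMonoid.max_power_factor' ha0 lam_not_unit
      obtain ⟨m, hm, hbm⟩ := exists_cong hb
      refine ⟨(k, ⟨m, hm⟩), Subtype.ext ?_⟩
      show Ideal.span {lamZ ^ k * m} = I
      rw [ha', Ideal.span_singleton_eq_span_singleton, hab]
      exact hbm.symm.mul_left _
  have h3 : ‖(3 : ℂ) ^ (-s)‖ < 1 := by
    have h := Complex.norm_cpow_eq_rpow_re_of_pos (x := 3) (by norm_num) (-s)
    push_cast at h
    rw [h]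
    exact Real.rpow_lt_one_of_one_lt_of_neg (by norm_num) (by simp; linarith)
  rw [← Equiv.tsum_eq (Equiv.ofBijective φ hφ)]
  have hterm : ∀ p : ℕ × MM, (Nat.card (Zω ⧸ ((Equiv.ofBijective φ hφ) p).1) : ℂ) ^ (-s)
      = ((3 : ℂ) ^ (-s)) ^ p.1 * (Nm p.2.1 : ℂ) ^ (-s) := by
    rintro ⟨k, m⟩
    have h0 : lamZ ^ k * m.1 ≠ 0 := mul_ne_zero (pow_ne_zero _ lam_ne) (ne_zero_of_cong m.2)
    have h1 : (Nat.card (Zω ⧸ Ideal.span {lamZ ^ k * m.1}) : ℂ) = (Nm (lamZ ^ k * m.1) : ℂ) := by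
      exact_mod_cast congrArg (fun x : ℝ => (x : ℂ)) (card_quot _ h0)
    show (Nat.card (Zω ⧸ Ideal.span {lamZ ^ k * m.1}) : ℂ) ^ (-s) = _
    rw [h1, cpow_Nm_mul, cpow_Nm_pow, Nm_lam]
    norm_num
  simp_rw [hterm]
  rw [← tsum_mul_tsum_of_summable_norm (f := fun k : ℕ => ((3 : ℂ) ^ (-s)) ^ k)
    (g := fun m : MM => (Nm m.1 : ℂ) ^ (-s)) (by
      simpa only [norm_pow] using summable_geometric_of_lt_one (norm_nonneg _) h3) (summable_MM hs),
    tsum_geometric_of_norm_lt_one h3, ← mul_assoc, mul_inv_cancel₀, one_mul]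
  intro h
  rw [sub_eq_zero] at h
  rw [← h] at h3
  simp at h3

lemma one_add_b (x : PP) :
    1 + -1 / ((Nm x.1 : ℂ) + 1) = (1 + (Nm x.1 : ℂ)⁻¹)⁻¹ := by
  have h := Nm_pos (ne_zero_of_cong x.2.2)
  have h1 : (Nm x.1 : ℂ) ≠ 0 := by exact_mod_cast h.ne'
  have h2 : (Nm x.1 : ℂ) + 1 ≠ 0 := by
    have : (0:ℝ) < Nm x.1 + 1 := by linarith
    exact_mod_cast this.ne'
  field_simp
  ring

open Classical in
lemma inner_eq (n : MM) :
    ∏' π : {π : Zω // Prime π ∧ (3 : Zω) ∣ (π - 1) ∧ π ∣ n.1}, (1 + (Nm π.1 : ℂ)⁻¹)⁻¹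
      = ∑' S : Finset PP, if ∀ π ∈ S, π.1 ∣ n.1 then ∏ π ∈ S, (-1 / ((Nm π.1 : ℂ) + 1)) else 0 := by
  have hfin : {π : PP | π.1 ∣ n.1}.Finite :=
    (finite_dvd (ne_zero_of_cong n.2)).preimage (f := fun π : PP => π.1)
      Subtype.val_injective.injOn
  have hmem : ∀ π : PP, π ∈ hfin.toFinset ↔ π.1 ∣ n.1 := fun π => by simp
  let e : {π : Zω // Prime π ∧ (3 : Zω) ∣ (π - 1) ∧ π ∣ n.1} ≃ {π : PP // π ∈ hfin.toFinset} :=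
    { toFun := fun π => ⟨⟨π.1, π.2.1, π.2.2.1⟩, (hmem _).mpr π.2.2.2⟩
      invFun := fun π => ⟨π.1.1, π.1.2.1, π.1.2.2, (hmem _).mp π.2⟩
      left_inv := fun _ => rfl
      right_inv := fun _ => rfl }
  have h1 : ∏' π : {π : Zω // Prime π ∧ (3 : Zω) ∣ (π - 1) ∧ π ∣ n.1}, (1 + (Nm π.1 : ℂ)⁻¹)⁻¹
      = ∏' π : {π : PP // π ∈ hfin.toFinset}, (1 + (Nm π.1.1 : ℂ)⁻¹)⁻¹ :=
    Equiv.tprod_eq e (fun π : {π : PP // π ∈ hfin.toFinset} => (1 + (Nm π.1.1 : ℂ)⁻¹)⁻¹)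
  rw [h1, Finset.tprod_subtype hfin.toFinset (fun π : PP => (1 + (Nm π.1 : ℂ)⁻¹)⁻¹)]
  simp_rw [← one_add_b]
  rw [Finset.prod_one_add, tsum_eq_sum (s := hfin.toFinset.powerset)]
  · refine Finset.sum_congr rfl (fun S hS => ?_)
    rw [if_pos]
    intro π hπ
    exact (hmem π).mp (Finset.mem_powerset.mp hS hπ)
  · intro S hS
    rw [if_neg]
    intro h
    exact hS (Finset.mem_powerset.mpr (fun π hπ => (hmem π).mpr (h π hπ)))

open Complex in
/-- for `Re(s) > 1`, the Dirichlet series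
`Z(s) = Σ_{m ≡ 1 (3)} N(m)^{-s} ∏_{π ≡ 1 (3), π ∣ m} (1 + N(π)^{-1})⁻¹` satisfies
`Z(s) = (1 - 3^{-s}) ζ_{ℚ(ω)}(s) ∏_{π ≡ 1 (3)} (1 - 1/(N(π)^s (N(π)+1)))`. -/
theorem Z_series_factorization (s : ℂ) (hs : 1 < s.re) :
    ∑' m : {m : Zω // (3 : Zω) ∣ (m - 1)},
        (Nm m.1 : ℂ) ^ (-s) *
          ∏' π : {π : Zω // Prime π ∧ (3 : Zω) ∣ (π - 1) ∧ π ∣ m.1},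
            (1 + (Nm π.1 : ℂ)⁻¹)⁻¹ =
      (1 - (3 : ℂ) ^ (-s)) *
        (∑' I : {I : Ideal Zω // I ≠ ⊥}, (Nat.card (Zω ⧸ I.1) : ℂ) ^ (-s)) *
        ∏' π : {π : Zω // Prime π ∧ (3 : Zω) ∣ (π - 1)},
          (1 - 1 / ((Nm π.1 : ℂ) ^ s * ((Nm π.1 : ℂ) + 1))) := by

  classical
  rw [zeta_eq hs]
  let a : PP → ℂ := fun π => -(1 / ((Nm π.1 : ℂ) ^ s * ((Nm π.1 : ℂ) + 1)))
  let b : PP → ℂ := fun π => -1 / ((Nm π.1 : ℂ) + 1)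
  have hab : ∀ π, a π = (Nm π.1 : ℂ) ^ (-s) * b π := by
    intro π
    simp only [a, b]
    rw [Complex.cpow_neg, one_div, mul_inv]; ring
  have ha : Summable (fun π => ‖a π‖) := by
    refine Summable.of_nonneg_of_le (fun _ => norm_nonneg _) (fun π => ?_) (summable_PP hs)
    rw [hab, norm_mul]
    have hp := Nm_pos (ne_zero_of_cong π.2.2)
    have : ‖b π‖ ≤ 1 := by
      simp only [b]
      rw [norm_div, norm_neg, norm_one]
      have h1 : (Nm π.1 : ℂ) + 1 = ((Nm π.1 + 1 : ℝ) : ℂ) := by push_cast; rfl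
      rw [h1, Complex.norm_real, Real.norm_of_nonneg (by linarith)]
      exact div_le_one_of_le₀ (by linarith) (by linarith)
    exact mul_le_of_le_one_right (norm_nonneg _) this
  have hS : Summable (fun S : Finset PP => ‖∏ π ∈ S, a π‖) := by
    simp_rw [norm_prod]
    exact summable_finsetProd_of_summable_nonneg (fun _ => norm_nonneg _) ha
  have hR : ∏' π : PP, (1 - 1 / ((Nm π.1 : ℂ) ^ s * ((Nm π.1 : ℂ) + 1)))
      = ∑' S : Finset PP, ∏ π ∈ S, a π := by
    rw [← tprod_one_add hS.of_norm]
    simp only [a, sub_eq_add_neg]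
  rw [hR, tsum_mul_tsum_of_summable_norm (f := fun m : MM => (Nm m.1 : ℂ) ^ (-s))
    (summable_MM hs) hS]
  let H : MM × Finset PP → ℂ := fun p =>
    (Nm p.1.1 : ℂ) ^ (-s) * if ∀ π ∈ p.2, π.1 ∣ p.1.1 then ∏ π ∈ p.2, b π else 0
  let φ : MM × Finset PP → MM × Finset PP := fun p =>
    (⟨p.1.1 * ∏ π ∈ p.2, π.1, mul_cong p.1.2 (prod_cong p.2)⟩, p.2)
  have hφ : Function.Injective φ := by
    rintro ⟨m, S⟩ ⟨m', S'⟩ h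
    simp only [φ, Prod.mk.injEq, Subtype.mk.injEq] at h
    obtain ⟨h1, rfl⟩ := h
    have := mul_right_cancel₀ (ne_zero_of_cong (prod_cong S)) h1
    rw [Subtype.ext this]
  have hrange : ∀ p, p ∉ Set.range φ → H p = 0 := by
    rintro ⟨n, S⟩ hp
    simp only [H]
    rw [if_neg, mul_zero]
    intro hd
    obtain ⟨c, hc⟩ := prod_dvd S hd
    rw [mul_comm] at hc
    refine hp ⟨(⟨c, cancel_cong (prod_cong S) (hc ▸ n.2)⟩, S), ?_⟩
    simp only [φ, Prod.mk.injEq, and_true]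
    exact Subtype.ext hc.symm
  have hcomp : ∀ p : MM × Finset PP, (Nm p.1.1 : ℂ) ^ (-s) * ∏ π ∈ p.2, a π = H (φ p) := by
    rintro ⟨m, S⟩
    simp only [H, φ]
    rw [if_pos (fun π hπ => (Finset.dvd_prod_of_mem (fun π : PP => π.1) hπ).mul_left _),
      cpow_Nm_mul, cpow_Nm_prod, mul_assoc, ← Finset.prod_mul_distrib]
    simp_rw [hab]
  have hsumF := summable_mul_of_summable_norm (f := fun m : MM => (Nm m.1 : ℂ) ^ (-s))
    (summable_MM hs) hS
  have hsumH : Summable H := by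
    rw [← hφ.summable_iff hrange]
    exact hsumF.congr hcomp
  rw [tsum_congr hcomp, hφ.tsum_eq (Function.support_subset_iff'.mpr hrange), hsumH.tsum_prod]
  refine tsum_congr (fun n => ?_)
  rw [inner_eq n]
  simp only [H, b]
  rw [tsum_mul_left]
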